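/- Let K be a finite field, let U₂, U₁, U₀ be finite-dimensional K-vector spaces, and let B : U₂ →ₗ[K] U₁ →ₗ[K] U₀ be a K-bilinear map. Then the cardinality of the autotopism group of B satisfies card Aut(B) ≤ card M(B)^× · (card K)^{(dim_K U₀)²}, where M(B)^× is the group of units of the adjoint algebra of B. -/

import Mathlib

/-!
An autotopism acting trivially on `U₀` is a pair `(f₂, f₁)` with `B (f₂ u₂) (f₁ u₁) = B u₂ u₁`,
that is, `B (f₂ u₂) u₁ = B u₂ (f₁⁻¹ u₁)`; so `(f₂, f₁) ↦ (f₂, f₁⁻¹)` identifies the kernel of the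
projection `Aut(B) → GL(U₀)` with the units of `M(B)`. The image of that projection lies in
`End(U₀)`, which has `(card K) ^ (dim U₀)²` elements.
-/

open MulOpposite

section

variable (R M : Type*) [CommSemiring R] [AddCommMonoid M] [Module R M] [Module.Free R M]
  [Module.Finite R M]

theorem natCard_end_eq_pow_finrank_sq :
    Nat.card (Module.End R M) = Nat.card R ^ Module.finrank R M ^ 2 := by
  obtain _ | _ := subsingleton_or_nontrivial R
  · have := Module.subsingleton R M
    simp
  · let b := Module.finBasis R M
    rw [Nat.card_congr (LinearMap.toMatrix b b).toEquiv, Matrix]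
    simp only [Nat.card_fun, Nat.card_fin, ← pow_mul, sq]

theorem natCard_linearEquiv_le_pow_finrank_sq [Finite R] :
    Nat.card (M ≃ₗ[R] M) ≤ Nat.card R ^ Module.finrank R M ^ 2 := by
  have : Finite M := Module.finite_of_finite R
  have : Finite (Module.End R M) := DFunLike.finite _
  rw [← natCard_end_eq_pow_finrank_sq]
  exact Nat.card_le_card_of_injective _ LinearEquiv.toLinearMap_injective

end

section

variable {R U₂ U₁ U₀ : Type*} [CommSemiring R]
  [AddCommMonoid U₂] [Module R U₂] [AddCommMonoid U₁] [Module R U₁] [AddCommMonoid U₀] [Module R U₀]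

/-- The group `Aut(B)` of autotopisms of a bilinear map `B`. -/
def autotopismGroup (B : U₂ →ₗ[R] U₁ →ₗ[R] U₀) :
    Subgroup ((U₂ ≃ₗ[R] U₂) × (U₁ ≃ₗ[R] U₁) × (U₀ ≃ₗ[R] U₀)) where
  carrier := {f | ∀ u₂ u₁, B (f.1 u₂) (f.2.1 u₁) = f.2.2 (B u₂ u₁)}
  one_mem' _ _ := rfl
  mul_mem' {f g} hf hg u₂ u₁ := by
    simp only [Prod.fst_mul, Prod.snd_mul, LinearEquiv.mul_apply, hf (g.1 u₂) (g.2.1 u₁), hg u₂ u₁]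
  inv_mem' {f} hf u₂ u₁ :=
    f.2.2.eq_symm_apply.mpr <| by
      simpa using (hf (f.1.symm u₂) (f.2.1.symm u₁)).symm

/-- The adjoint algebra `M(B)` of a bilinear map `B`. The second component carries the opposite
multiplication, so that `(f, g) * (f', g') = (f ∘ f', g' ∘ g)`. -/
def adjointAlgebra (B : U₂ →ₗ[R] U₁ →ₗ[R] U₀) :
    Subalgebra R (Module.End R U₂ × (Module.End R U₁)ᵐᵒᵖ) where
  carrier := {p | ∀ u₂ u₁, B (p.1 u₂) u₁ = B u₂ (p.2.unop u₁)}
  mul_mem' {p q} hp hq u₂ u₁ := (hp (q.1 u₂) u₁).trans (hq u₂ (p.2.unop u₁))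
  add_mem' {p q} hp hq u₂ u₁ := by
    simp only [Prod.fst_add, Prod.snd_add, unop_add, LinearMap.add_apply, map_add, hp u₂ u₁,
      hq u₂ u₁]
  algebraMap_mem' r u₂ u₁ := by simp

variable (B : U₂ →ₗ[R] U₁ →ₗ[R] U₀)

/-- The projection of `Aut(B)` to `GL(U₀)`. -/
def autotopismGroupToGL : autotopismGroup B →* (U₀ ≃ₗ[R] U₀) :=
  ((MonoidHom.snd _ _).comp (MonoidHom.snd _ _)).comp (autotopismGroup B).subtype

variable {B}

theorem mem_autotopismGroup {f : (U₂ ≃ₗ[R] U₂) × (U₁ ≃ₗ[R] U₁) × (U₀ ≃ₗ[R] U₀)} :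
    f ∈ autotopismGroup B ↔ ∀ u₂ u₁, B (f.1 u₂) (f.2.1 u₁) = f.2.2 (B u₂ u₁) :=
  Iff.rfl

theorem mem_adjointAlgebra {p : Module.End R U₂ × (Module.End R U₁)ᵐᵒᵖ} :
    p ∈ adjointAlgebra B ↔ ∀ u₂ u₁, B (p.1 u₂) u₁ = B u₂ (p.2.unop u₁) :=
  Iff.rfl

theorem mem_autotopismGroup_iff_mem_adjointAlgebra
    {f : (U₂ ≃ₗ[R] U₂) × (U₁ ≃ₗ[R] U₁) × (U₀ ≃ₗ[R] U₀)} (hf : f.2.2 = 1) :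
    f ∈ autotopismGroup B ↔
      ((f.1 : Module.End R U₂), op (f.2.1.symm : Module.End R U₁)) ∈ adjointAlgebra B := by
  rw [mem_autotopismGroup, mem_adjointAlgebra]
  refine forall_congr' fun u₂ ↦ ?_
  rw [f.2.1.toEquiv.forall_congr_left]
  simp [hf]

variable (B)

/-- The homomorphism `(f₂, f₁, 1) ↦ (f₂, f₁⁻¹)` from the kernel of `Aut(B) → GL(U₀)` to the units of
`M(B)`. -/
def kerToUnitsAdjointAlgebra : (autotopismGroupToGL B).ker →* (adjointAlgebra B)ˣ :=
  MonoidHom.toHomUnits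
    { toFun f := ⟨(f.1.1.1, op f.1.1.2.1.symm),
        (mem_autotopismGroup_iff_mem_adjointAlgebra f.2).mp f.1.2⟩
      map_one' := rfl
      map_mul' _ _ := rfl }

theorem kerToUnitsAdjointAlgebra_injective : Function.Injective (kerToUnitsAdjointAlgebra B) := by
  intro f g hfg
  obtain ⟨h₂, h₁⟩ := Prod.mk.inj (congrArg Subtype.val (congrArg Units.val hfg))
  have h₁' : f.1.1.2.1.symm = g.1.1.2.1.symm := LinearEquiv.toLinearMap_injective (op_injective h₁)
  have h₀ : f.1.1.2.2 = g.1.1.2.2 := f.2.trans g.2.symm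
  exact Subtype.ext <| Subtype.ext <| Prod.ext (LinearEquiv.toLinearMap_injective h₂) <|
    Prod.ext (inv_injective h₁') h₀

theorem kerToUnitsAdjointAlgebra_surjective :
    Function.Surjective (kerToUnitsAdjointAlgebra B) := by
  rintro ⟨⟨p, hp⟩, ⟨q, hq⟩, hpq, hqp⟩
  obtain ⟨hpq₂, hpq₁⟩ := Prod.mk.inj (congrArg Subtype.val hpq)
  obtain ⟨hqp₂, hqp₁⟩ := Prod.mk.inj (congrArg Subtype.val hqp)
  let f₂ : U₂ ≃ₗ[R] U₂ := .ofLinearMap p.1 q.1 hpq₂ hqp₂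
  let f₁ : U₁ ≃ₗ[R] U₁ :=
    .ofLinearMap q.2.unop p.2.unop (congrArg unop hpq₁) (congrArg unop hqp₁)
  have hf : (f₂, f₁, 1) ∈ autotopismGroup B :=
    (mem_autotopismGroup_iff_mem_adjointAlgebra rfl).mpr hp
  exact ⟨⟨⟨(f₂, f₁, 1), hf⟩, rfl⟩, Units.ext rfl⟩

theorem natCard_autotopismGroup_eq_mul_natCard_range :
    Nat.card (autotopismGroup B) =
      Nat.card (adjointAlgebra B)ˣ * Nat.card (autotopismGroupToGL B).range := by
  rw [← (autotopismGroupToGL B).ker.card_mul_index, Subgroup.index_ker,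
    Nat.card_eq_of_bijective (kerToUnitsAdjointAlgebra B)
      ⟨kerToUnitsAdjointAlgebra_injective B, kerToUnitsAdjointAlgebra_surjective B⟩]

theorem natCard_units_adjointAlgebra :
    Nat.card (adjointAlgebra B)ˣ =
      Nat.card {p : Module.End R U₂ × Module.End R U₁ //
        (∀ u₂ u₁, B (p.1 u₂) u₁ = B u₂ (p.2 u₁)) ∧
        ∃ q : Module.End R U₂ × Module.End R U₁,
          (∀ u₂ u₁, B (q.1 u₂) u₁ = B u₂ (q.2 u₁)) ∧
          p.1 * q.1 = 1 ∧ q.1 * p.1 = 1 ∧ p.2 * q.2 = 1 ∧ q.2 * p.2 = 1} := by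
  refine Nat.card_eq_of_bijective (fun u ↦ ⟨(u.val.1.1, u.val.1.2.unop), u.val.2,
    (u.inv.1.1, u.inv.1.2.unop), u.inv.2, ?_⟩) ⟨fun u v huv ↦ ?_, ?_⟩
  · obtain ⟨h₂, h₁⟩ := Prod.mk.inj (congrArg Subtype.val u.val_inv)
    obtain ⟨h₂', h₁'⟩ := Prod.mk.inj (congrArg Subtype.val u.inv_val)
    exact ⟨h₂, h₂', congrArg unop h₁', congrArg unop h₁⟩
  · obtain ⟨h₂, h₁⟩ := Prod.mk.inj (congrArg Subtype.val huv)
    exact Units.ext <| Subtype.ext <| Prod.ext h₂ (unop_injective h₁)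
  · rintro ⟨p, hp, q, hq, hpq₂, hqp₂, hpq₁, hqp₁⟩
    exact ⟨⟨⟨(p.1, op p.2), hp⟩, ⟨(q.1, op q.2), hq⟩,
      Subtype.ext <| Prod.ext hpq₂ (congrArg op hqp₁),
      Subtype.ext <| Prod.ext hqp₂ (congrArg op hpq₁)⟩, rfl⟩

theorem card_autotopism_le_general [Finite R] [Module.Free R U₀] [Module.Finite R U₀] :
    Nat.card (autotopismGroup B) ≤
      Nat.card (adjointAlgebra B)ˣ * Nat.card R ^ Module.finrank R U₀ ^ 2 := by
  have : Finite U₀ := Module.finite_of_finite R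
  have : Finite (U₀ ≃ₗ[R] U₀) := DFunLike.finite _
  calc Nat.card (autotopismGroup B)
      = Nat.card (adjointAlgebra B)ˣ * Nat.card (autotopismGroupToGL B).range :=
        natCard_autotopismGroup_eq_mul_natCard_range B
    _ ≤ Nat.card (adjointAlgebra B)ˣ * Nat.card (U₀ ≃ₗ[R] U₀) :=
        Nat.mul_le_mul_left _ (Subgroup.card_le_card_group _)
    _ ≤ Nat.card (adjointAlgebra B)ˣ * Nat.card R ^ Module.finrank R U₀ ^ 2 :=
        Nat.mul_le_mul_left _ (natCard_linearEquiv_le_pow_finrank_sq R U₀)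

end

/-- Over a finite field and finite-dimensional spaces, the number of
autotopisms of a bilinear map `B` is at most the number of units of the adjoint
algebra `M(B)` (pairs admitting a two-sided inverse pair in `M(B)`) times
`(card K) ^ (dim U₀)²`. -/
theorem card_autotopism_le
    {K : Type*} [Field K] [Finite K]
    {U₂ U₁ U₀ : Type*}
    [AddCommGroup U₂] [Module K U₂] [FiniteDimensional K U₂]
    [AddCommGroup U₁] [Module K U₁] [FiniteDimensional K U₁]
    [AddCommGroup U₀] [Module K U₀] [FiniteDimensional K U₀]
    (B : U₂ →ₗ[K] U₁ →ₗ[K] U₀) :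
    Nat.card {f : (U₂ ≃ₗ[K] U₂) × (U₁ ≃ₗ[K] U₁) × (U₀ ≃ₗ[K] U₀) //
        ∀ (u₂ : U₂) (u₁ : U₁), B (f.1 u₂) (f.2.1 u₁) = f.2.2 (B u₂ u₁)} ≤
      Nat.card {p : Module.End K U₂ × Module.End K U₁ //
          (∀ (u₂ : U₂) (u₁ : U₁), B (p.1 u₂) u₁ = B u₂ (p.2 u₁)) ∧
          ∃ q : Module.End K U₂ × Module.End K U₁,
            (∀ (u₂ : U₂) (u₁ : U₁), B (q.1 u₂) u₁ = B u₂ (q.2 u₁)) ∧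
            p.1 * q.1 = 1 ∧ q.1 * p.1 = 1 ∧ p.2 * q.2 = 1 ∧ q.2 * p.2 = 1} *
        Nat.card K ^ (Module.finrank K U₀) ^ 2 :=
  (card_autotopism_le_general B).trans_eq (by rw [natCard_units_adjointAlgebra])
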